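/- Assume the integral VHI data hypotheses together with: K ⊆ V nonempty, closed and convex; A : V → V* Lipschitz continuous and strongly monotone with constant m_A > 0; Φ : V → ℝ convex and continuous; f ∈ V*; and α_ψ c_Δ² < m_A. Then the variational-hemivariational inequality: find u ∈ K such that ⟨Au, v − u⟩ + Φ(v) − Φ(u) + ∫_Δ ψ⁰(γ_ψ u(x); γ_ψ v(x) − γ_ψ u(x)) dμ(x) ≥ ⟨f, v − u⟩ for all v ∈ K, has a unique solution u ∈ K. Moreover, the solution depends Lipschitz continuously on f ∈ V*: if u₁, u₂ are the solutions corresponding to f₁, f₂ ∈ V*, then ‖u₁ − u₂‖_V ≤ c ‖f₁ − f₂‖_{V*} for a constant c > 0 independent of f₁, f₂. -/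

import Mathlib

open Filter Topology MeasureTheory RealInnerProductSpace

/-- The Clarke (generalized) directional derivative of `f` at `u` in direction `v`. -/
noncomputable def clarkeDeriv {X : Type*} [NormedAddCommGroup X] [NormedSpace ℝ X]
    (f : X → ℝ) (u v : X) : ℝ :=
  Filter.limsup (fun p : X × ℝ => (f (p.1 + p.2 • v) - f p.1) / p.2)
    ((𝓝 u) ×ˢ 𝓝[>] (0:ℝ))

section Clarke

variable {X : Type*} [NormedAddCommGroup X] [NormedSpace ℝ X] {f : X → ℝ}

theorem tendsto_add_smul_nhds (u w : X) :
    Tendsto (fun p : X × ℝ => p.1 + p.2 • w) ((𝓝 u) ×ˢ 𝓝[>] (0 : ℝ)) (𝓝 u) := by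
  have h : Tendsto (fun p : X × ℝ => p.1 + p.2 • w) (𝓝 (u, (0 : ℝ))) (𝓝 (u + (0 : ℝ) • w)) :=
    Continuous.tendsto (by fun_prop : Continuous fun p : X × ℝ => p.1 + p.2 • w) (u, 0)
  rw [zero_smul, add_zero, nhds_prod_eq] at h
  exact h.mono_left (Filter.prod_mono le_rfl nhdsWithin_le_nhds)

theorem eventually_snd_pos {Y : Type*} [TopologicalSpace Y] (u : Y) :
    ∀ᶠ p in (𝓝 u) ×ˢ 𝓝[>] (0 : ℝ), 0 < p.2 :=
  tendsto_snd.eventually (eventually_mem_nhdsWithin (a := (0 : ℝ)) (s := Set.Ioi 0))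

theorem LocallyLipschitz.exists_eventually_abs_quotient_le (hf : LocallyLipschitz f) (u v : X) :
    ∃ C : ℝ, ∀ᶠ p in (𝓝 u) ×ˢ 𝓝[>] (0 : ℝ), |(f (p.1 + p.2 • v) - f p.1) / p.2| ≤ C := by
  obtain ⟨L, s, hs, hL⟩ := hf u
  refine ⟨L * ‖v‖, ?_⟩
  filter_upwards [tendsto_fst.eventually hs, (tendsto_add_smul_nhds u v).eventually hs,
    eventually_snd_pos u] with p h1 h2 h3
  have h := hL.dist_le_mul _ h2 _ h1
  rw [Real.dist_eq, dist_eq_norm, add_sub_cancel_left, norm_smul, Real.norm_eq_abs,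
    abs_of_pos h3] at h
  rw [abs_div, abs_of_pos h3, div_le_iff₀ h3]
  linarith

theorem LocallyLipschitz.isBoundedUnder_quotient (hf : LocallyLipschitz f) (u v : X) :
    ((𝓝 u) ×ˢ 𝓝[>] (0 : ℝ)).IsBoundedUnder (· ≤ ·)
      (fun p : X × ℝ => (f (p.1 + p.2 • v) - f p.1) / p.2) := by
  obtain ⟨C, hC⟩ := hf.exists_eventually_abs_quotient_le u v
  exact isBoundedUnder_of_eventually_le (hC.mono fun p hp => (abs_le.1 hp).2)

theorem eventually_quotient_lt_of_clarkeDeriv_lt (hf : LocallyLipschitz f) {u v : X} {r : ℝ}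
    (h : clarkeDeriv f u v < r) :
    ∀ᶠ p in (𝓝 u) ×ˢ 𝓝[>] (0 : ℝ), (f (p.1 + p.2 • v) - f p.1) / p.2 < r :=
  eventually_lt_of_limsup_lt h (hf.isBoundedUnder_quotient u v)

theorem clarkeDeriv_le_of_eventually (hf : LocallyLipschitz f) {u v : X} {r : ℝ}
    (h : ∀ᶠ p in (𝓝 u) ×ˢ 𝓝[>] (0 : ℝ), (f (p.1 + p.2 • v) - f p.1) / p.2 ≤ r) :
    clarkeDeriv f u v ≤ r := by
  obtain ⟨C, hC⟩ := hf.exists_eventually_abs_quotient_le u v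
  exact limsup_le_of_le (isBoundedUnder_of_eventually_ge (a := -C)
    (hC.mono fun p hp => (abs_le.1 hp).1)).isCoboundedUnder_le h

theorem clarkeDeriv_zero (u : X) : clarkeDeriv f u 0 = 0 := by
  simp [clarkeDeriv]

theorem clarkeDeriv_add_le (hf : LocallyLipschitz f) (u v w : X) :
    clarkeDeriv f u (v + w) ≤ clarkeDeriv f u v + clarkeDeriv f u w := by
  refine le_of_forall_pos_le_add fun ε hε => ?_
  have hv := eventually_quotient_lt_of_clarkeDeriv_lt hf
    (lt_add_of_pos_right (clarkeDeriv f u v) (half_pos hε))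
  have hw := eventually_quotient_lt_of_clarkeDeriv_lt hf
    (lt_add_of_pos_right (clarkeDeriv f u w) (half_pos hε))
  refine clarkeDeriv_le_of_eventually hf ?_
  filter_upwards [((tendsto_add_smul_nhds u w).prodMk tendsto_snd).eventually hv, hw] with p h1 h2
  have : (f (p.1 + p.2 • (v + w)) - f p.1) / p.2 =
      (f (p.1 + p.2 • w + p.2 • v) - f (p.1 + p.2 • w)) / p.2 +
        (f (p.1 + p.2 • w) - f p.1) / p.2 := by
    rw [← add_div, smul_add, add_comm (p.2 • v), add_assoc]
    ring
  linarith

theorem clarkeDeriv_smul_le (hf : LocallyLipschitz f) (u v : X) {c : ℝ} (hc : 0 < c) :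
    clarkeDeriv f u (c • v) ≤ c * clarkeDeriv f u v := by
  refine le_of_forall_pos_le_add fun ε hε => ?_
  have hv := eventually_quotient_lt_of_clarkeDeriv_lt hf
    (lt_add_of_pos_right (clarkeDeriv f u v) (div_pos hε hc))
  have hmul : Tendsto (fun t : ℝ => t * c) (𝓝[>] 0) (𝓝[>] 0) := by
    refine tendsto_nhdsWithin_iff.2 ⟨?_, ?_⟩
    · have : Tendsto (fun t : ℝ => t * c) (𝓝 0) (𝓝 (0 * c)) :=
        Continuous.tendsto (by fun_prop) 0
      rw [zero_mul] at this
      exact this.mono_left nhdsWithin_le_nhds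
    · filter_upwards [self_mem_nhdsWithin] with t ht
      exact mul_pos ht hc
  refine clarkeDeriv_le_of_eventually hf ?_
  filter_upwards [(tendsto_fst.prodMk (hmul.comp tendsto_snd)).eventually hv,
    eventually_snd_pos u] with p h1 h2
  simp only [Function.comp_apply] at h1
  rw [smul_smul]
  rw [div_lt_iff₀ (mul_pos h2 hc)] at h1
  rw [div_le_iff₀ h2]
  refine h1.le.trans_eq ?_
  field_simp

theorem clarkeDeriv_smul (hf : LocallyLipschitz f) (u v : X) {c : ℝ} (hc : 0 < c) :
    clarkeDeriv f u (c • v) = c * clarkeDeriv f u v := by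
  refine le_antisymm (clarkeDeriv_smul_le hf u v hc) ?_
  have h := clarkeDeriv_smul_le hf u (c • v) (inv_pos.2 hc)
  rw [smul_smul, inv_mul_cancel₀ hc.ne', one_smul] at h
  calc c * clarkeDeriv f u v ≤ c * (c⁻¹ * clarkeDeriv f u (c • v)) := by gcongr
    _ = clarkeDeriv f u (c • v) := by field_simp

/-- The Clarke directional derivative is attained at an element of the subdifferential. -/
theorem exists_linearMap_le_clarkeDeriv (hf : LocallyLipschitz f) (u w : X) :
    ∃ g : X →ₗ[ℝ] ℝ, g w = clarkeDeriv f u w ∧ ∀ x, g x ≤ clarkeDeriv f u x := by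
  have key : ∀ c : ℝ, c * clarkeDeriv f u w ≤ clarkeDeriv f u (c • w) := by
    intro c
    rcases lt_trichotomy c 0 with hc | rfl | hc
    · have h1 := clarkeDeriv_add_le hf u (c • w) ((-c) • w)
      rw [← add_smul, add_neg_cancel, zero_smul, clarkeDeriv_zero,
        clarkeDeriv_smul hf u w (neg_pos.2 hc)] at h1
      linarith
    · simp [clarkeDeriv_zero]
    · exact (clarkeDeriv_smul hf u w hc).ge
  have H : ∀ c : ℝ, c • w = 0 → (RingHom.id ℝ) c • clarkeDeriv f u w = 0 := by
    intro c hc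
    rcases smul_eq_zero.1 hc with rfl | rfl
    · simp
    · simp [clarkeDeriv_zero]
  obtain ⟨g, hg, hgle⟩ := exists_extension_of_le_sublinear
    (LinearPMap.mkSpanSingleton' w (clarkeDeriv f u w) H) (clarkeDeriv f u)
    (fun c hc x => clarkeDeriv_smul hf u x hc) (clarkeDeriv_add_le hf u) (by
      rintro ⟨x, hx⟩
      obtain ⟨c, rfl⟩ := Submodule.mem_span_singleton.1 hx
      rw [LinearPMap.mkSpanSingleton'_apply]
      exact key c)
  refine ⟨g, ?_, hgle⟩
  exact (hg ⟨w, Submodule.mem_span_singleton_self w⟩).trans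
    (LinearPMap.mkSpanSingleton'_apply_self _ _ H _)

/-- A one-sided mean value inequality for the Clarke directional derivative. -/
theorem exists_lt_clarkeDeriv_of_lt_sub (hf : LocallyLipschitz f) (a b : X) {r : ℝ}
    (hr : r < f b - f a) :
    ∃ s ∈ Set.Ico (0 : ℝ) 1, r ≤ clarkeDeriv f (a + s • (b - a)) (b - a) := by
  by_contra! hcon
  have hcont : Continuous fun t : ℝ => f (a + t • (b - a)) :=
    hf.continuous.comp (by fun_prop)
  have h := image_le_of_liminf_slope_right_lt_deriv_boundary (a := 0) (b := 1)
    (f := fun t : ℝ => f (a + t • (b - a)))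
    (f' := fun t => clarkeDeriv f (a + t • (b - a)) (b - a))
    (B := fun t => f a + t * r) (B' := fun _ => r) hcont.continuousOn ?_ (by simp)
    (fun x => by simpa using ((hasDerivAt_id x).mul_const r).const_add (f a))
    (fun x hx _ => hcon x hx) (Set.right_mem_Icc.2 zero_le_one)
  · simp only [one_smul, add_sub_cancel, one_mul] at h
    linarith
  · intro x _ r' hr'
    have hev := eventually_quotient_lt_of_clarkeDeriv_lt hf hr'
    have hsub : Tendsto (fun z : ℝ => z - x) (𝓝[>] x) (𝓝[>] 0) := by
      refine tendsto_nhdsWithin_iff.2 ⟨?_, ?_⟩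
      · have : Tendsto (fun z : ℝ => z - x) (𝓝 x) (𝓝 (x - x)) :=
          Continuous.tendsto (by fun_prop) x
        rw [sub_self] at this
        exact this.mono_left nhdsWithin_le_nhds
      · filter_upwards [self_mem_nhdsWithin] with z hz
        exact Set.mem_Ioi.2 (sub_pos.2 (Set.mem_Ioi.1 hz))
    refine Eventually.frequently ?_
    filter_upwards [((tendsto_const_nhds (x := a + x • (b - a))).prodMk hsub).eventually hev]
      with z hz
    rw [slope_def_field]
    convert hz using 4
    rw [add_assoc, ← add_smul]
    congr 3
    ring

/-- A relaxed monotonicity bound on the Clarke derivative gives approximate midpoint convexity. -/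
theorem midpoint_le_of_clarkeDeriv_le (hf : LocallyLipschitz f) {α : ℝ} (hα : 0 ≤ α)
    (hmon : ∀ z₁ z₂ : X,
      clarkeDeriv f z₁ (z₂ - z₁) + clarkeDeriv f z₂ (z₁ - z₂) ≤ α * ‖z₁ - z₂‖ ^ 2) (a b : X) :
    f ((1 / 2 : ℝ) • (a + b)) ≤ (f a + f b) / 2 + α / 4 * ‖a - b‖ ^ 2 := by
  set c := (1 / 2 : ℝ) • (a + b) with hc
  set d := (1 / 2 : ℝ) • (b - a) with hd
  have hca : c - a = d := by rw [hc, hd]; module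
  have hcb : c - b = -d := by rw [hc, hd]; module
  have hnd : ‖d‖ ^ 2 = ‖a - b‖ ^ 2 / 4 := by
    rw [hd, norm_smul, norm_sub_rev b a, mul_pow]; norm_num; ring
  refine le_of_forall_pos_le_add fun ε hε => ?_
  obtain ⟨s, ⟨hs0, hs1⟩, hs⟩ := exists_lt_clarkeDeriv_of_lt_sub hf a c (sub_lt_self _ hε)
  obtain ⟨t, ⟨ht0, ht1⟩, ht⟩ := exists_lt_clarkeDeriv_of_lt_sub hf b c (sub_lt_self _ hε)
  rw [hca] at hs
  rw [hcb] at ht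
  have hτ : 0 < 2 - s - t := by linarith
  have e1 : b + t • -d - (a + s • d) = (2 - s - t) • d := by rw [hd]; module
  have e2 : a + s • d - (b + t • -d) = (2 - s - t) • -d := by rw [hd]; module
  have h := hmon (a + s • d) (b + t • -d)
  rw [e1, e2, clarkeDeriv_smul hf _ _ hτ, clarkeDeriv_smul hf _ _ hτ, norm_smul, norm_neg, mul_pow,
    Real.norm_eq_abs, sq_abs] at h
  have h2 : clarkeDeriv f (a + s • d) d + clarkeDeriv f (b + t • -d) (-d) ≤
      (2 - s - t) * (α * ‖d‖ ^ 2) := by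
    refine le_of_mul_le_mul_left ?_ hτ
    linarith
  have h3 : (2 - s - t) * (α * ‖d‖ ^ 2) ≤ 2 * (α * ‖d‖ ^ 2) := by
    gcongr
    linarith
  rw [hnd] at h3
  rw [hnd] at h2
  linarith

end Clarke

section ClarkeGrowth

variable {E : Type*} [NormedAddCommGroup E] [InnerProductSpace ℝ E] {f : E → ℝ} {c : ℝ}

theorem abs_clarkeDeriv_le_of_subgradient_bound [FiniteDimensional ℝ E] (hf : LocallyLipschitz f)
    (hgrowth : ∀ z ξ : E, (∀ w, ⟪ξ, w⟫ ≤ clarkeDeriv f z w) → ‖ξ‖ ≤ c * (1 + ‖z‖)) (z w : E) :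
    |clarkeDeriv f z w| ≤ c * (1 + ‖z‖) * ‖w‖ := by
  obtain ⟨g, hgw, hg⟩ := exists_linearMap_le_clarkeDeriv hf z w
  have hinner : ∀ x, ⟪(InnerProductSpace.toDual ℝ E).symm (LinearMap.toContinuousLinearMap g), x⟫ =
      g x := fun x => InnerProductSpace.toDual_symm_apply
  rw [← hgw, ← hinner w]
  refine (abs_real_inner_le_norm _ _).trans ?_
  gcongr
  exact hgrowth z _ fun x => (hinner x).trans_le (hg x)

theorem abs_sub_le_of_abs_clarkeDeriv_le (hf : LocallyLipschitz f) (hc : 0 ≤ c)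
    (hG : ∀ z w : E, |clarkeDeriv f z w| ≤ c * (1 + ‖z‖) * ‖w‖) (a b : E) :
    |f b - f a| ≤ c * (1 + ‖a‖ + ‖b - a‖) * ‖b - a‖ := by
  have hseg : ∀ s ∈ Set.Icc (0 : ℝ) 1, ‖a + s • (b - a)‖ ≤ ‖a‖ + ‖b - a‖ := by
    intro s hs
    refine (norm_add_le _ _).trans ?_
    rw [norm_smul, Real.norm_eq_abs, abs_of_nonneg hs.1]
    gcongr
    exact mul_le_of_le_one_left (norm_nonneg _) hs.2
  have hbound : ∀ s ∈ Set.Icc (0 : ℝ) 1, ∀ w : E, ‖w‖ = ‖b - a‖ →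
      clarkeDeriv f (a + s • (b - a)) w ≤ c * (1 + ‖a‖ + ‖b - a‖) * ‖b - a‖ := by
    intro s hs w hw
    refine (le_abs_self _).trans ((hG _ _).trans ?_)
    rw [hw, add_assoc]
    gcongr
    exact hseg s hs
  rw [abs_le]
  constructor
  · refine neg_le.1 (le_of_forall_lt fun r hr => ?_)
    obtain ⟨r', hrr', hr'⟩ := exists_between hr
    obtain ⟨s, hs, h⟩ := exists_lt_clarkeDeriv_of_lt_sub hf b a (hr'.trans_eq (neg_sub _ _))
    have e : b + s • (a - b) = a + (1 - s) • (b - a) := by module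
    rw [e] at h
    exact hrr'.trans_le (h.trans (hbound (1 - s) ⟨by linarith [hs.2], by linarith [hs.1]⟩ _
      (norm_sub_rev a b)))
  · refine le_of_forall_lt fun r hr => ?_
    obtain ⟨r', hrr', hr'⟩ := exists_between hr
    obtain ⟨s, hs, h⟩ := exists_lt_clarkeDeriv_of_lt_sub hf a b hr'
    exact hrr'.trans_le (h.trans (hbound s ⟨hs.1, hs.2.le⟩ _ rfl))

theorem abs_le_add_mul_norm_sq (hf : LocallyLipschitz f) (hc : 0 ≤ c)
    (hG : ∀ z w : E, |clarkeDeriv f z w| ≤ c * (1 + ‖z‖) * ‖w‖) (z : E) :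
    |f z| ≤ |f 0| + c + 2 * c * ‖z‖ ^ 2 := by
  have h := abs_sub_le_of_abs_clarkeDeriv_le hf hc hG 0 z
  simp only [norm_zero, sub_zero, add_zero] at h
  have h1 : |f z| ≤ |f 0| + |f z - f 0| := by
    simpa using abs_add_le (f 0) (f z - f 0)
  nlinarith [mul_nonneg hc (sq_nonneg (1 - ‖z‖)), mul_nonneg hc (norm_nonneg z)]

/-- The Clarke derivative is jointly upper semicontinuous. -/
theorem isOpen_setOf_clarkeDeriv_lt (hf : LocallyLipschitz f)
    (hG : ∀ z w : E, |clarkeDeriv f z w| ≤ c * (1 + ‖z‖) * ‖w‖) (r : ℝ) :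
    IsOpen {p : E × E | clarkeDeriv f p.1 p.2 < r} := by
  rw [isOpen_iff_mem_nhds]
  rintro ⟨z₀, w₀⟩ h
  obtain ⟨r', h1, h2⟩ := exists_between (show clarkeDeriv f z₀ w₀ < r from h)
  have hev := eventually_quotient_lt_of_clarkeDeriv_lt hf h1
  obtain ⟨P, hP, Q, hQ, hPQ⟩ := Filter.eventually_prod_iff.1 hev
  have hnear : ∀ᶠ z in 𝓝 z₀, clarkeDeriv f z w₀ ≤ r' := by
    filter_upwards [hP.eventually_nhds] with z hz
    refine clarkeDeriv_le_of_eventually hf ?_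
    filter_upwards [tendsto_fst.eventually hz, tendsto_snd.eventually hQ] with p hp hq
    exact (hPQ hp hq).le
  have hcont : Tendsto (fun p : E × E => r' + c * (1 + ‖p.1‖) * ‖p.2 - w₀‖) (𝓝 (z₀, w₀))
      (𝓝 (r' + c * (1 + ‖z₀‖) * ‖w₀ - w₀‖)) :=
    Continuous.tendsto
      (by fun_prop : Continuous fun p : E × E => r' + c * (1 + ‖p.1‖) * ‖p.2 - w₀‖) (z₀, w₀)
  rw [sub_self, norm_zero, mul_zero, add_zero] at hcont
  filter_upwards [(continuous_fst.tendsto (z₀, w₀)).eventually hnear,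
    hcont.eventually (gt_mem_nhds h2)] with p hp1 hp2
  have h3 := clarkeDeriv_add_le hf p.1 w₀ (p.2 - w₀)
  rw [add_sub_cancel] at h3
  have h4 := (le_abs_self _).trans (hG p.1 (p.2 - w₀))
  change clarkeDeriv f p.1 p.2 < r
  linarith

theorem measurable_clarkeDeriv [MeasurableSpace E] [BorelSpace E] [SecondCountableTopology E]
    (hf : LocallyLipschitz f) (hG : ∀ z w : E, |clarkeDeriv f z w| ≤ c * (1 + ‖z‖) * ‖w‖) :
    Measurable fun p : E × E => clarkeDeriv f p.1 p.2 :=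
  measurable_of_Iio fun r => (isOpen_setOf_clarkeDeriv_lt hf hG r).measurableSet

end ClarkeGrowth

section NormSq

variable {E : Type*} [NormedAddCommGroup E] [InnerProductSpace ℝ E]
  {Δ : Type*} [MeasurableSpace Δ] {μ : Measure Δ}

theorem integrable_norm_sq_coeFn_Lp {F : Type*} [NormedAddCommGroup F] (a : Lp F 2 μ) :
    Integrable (fun x => ‖a x‖ ^ 2) μ :=
  (memLp_two_iff_integrable_sq_norm (Lp.aestronglyMeasurable a)).1 (Lp.memLp a)

theorem integral_norm_sq_coeFn_Lp (a : Lp E 2 μ) : ∫ x, ‖a x‖ ^ 2 ∂μ = ‖a‖ ^ 2 := by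
  rw [← real_inner_self_eq_norm_sq, L2.inner_def]
  simp_rw [real_inner_self_eq_norm_sq]

theorem integrable_norm_sq_sub {F : Type*} [NormedAddCommGroup F] (a b : Lp F 2 μ) :
    Integrable (fun x => ‖a x - b x‖ ^ 2) μ :=
  (integrable_norm_sq_coeFn_Lp (a - b)).congr
    ((Lp.coeFn_sub a b).mono fun x hx => by simp only [hx, Pi.sub_apply])

theorem integral_norm_sq_sub (a b : Lp E 2 μ) : ∫ x, ‖a x - b x‖ ^ 2 ∂μ = ‖a - b‖ ^ 2 := by
  rw [← integral_norm_sq_coeFn_Lp]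
  exact integral_congr_ae ((Lp.coeFn_sub a b).mono fun x hx => by simp only [hx, Pi.sub_apply])

end NormSq

section IntegralFunctional

variable {E : Type*} [NormedAddCommGroup E] [InnerProductSpace ℝ E] {f : E → ℝ} {c : ℝ}
  {Δ : Type*} [MeasurableSpace Δ] {μ : Measure Δ} [IsFiniteMeasure μ]

theorem integrable_comp_Lp (hf : LocallyLipschitz f) (hc : 0 ≤ c)
    (hG : ∀ z w : E, |clarkeDeriv f z w| ≤ c * (1 + ‖z‖) * ‖w‖) (a : Lp E 2 μ) :
    Integrable (fun x => f (a x)) μ :=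
  Integrable.mono' (((integrable_const (|f 0| + c)).add
    ((integrable_norm_sq_coeFn_Lp a).const_mul (2 * c))))
    (hf.continuous.comp_aestronglyMeasurable (Lp.aestronglyMeasurable a))
    (Eventually.of_forall fun x => abs_le_add_mul_norm_sq hf hc hG (a x))

theorem exists_abs_integral_comp_le (hf : LocallyLipschitz f) (hc : 0 ≤ c)
    (hG : ∀ z w : E, |clarkeDeriv f z w| ≤ c * (1 + ‖z‖) * ‖w‖) :
    ∃ C : ℝ, ∀ a : Lp E 2 μ, |∫ x, f (a x) ∂μ| ≤ C + 2 * c * ‖a‖ ^ 2 := by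
  refine ⟨∫ _, (|f 0| + c) ∂μ, fun a => ?_⟩
  rw [← integral_norm_sq_coeFn_Lp, ← integral_const_mul, ← integral_add (integrable_const _)
    ((integrable_norm_sq_coeFn_Lp a).const_mul (2 * c))]
  rw [← Real.norm_eq_abs]
  exact norm_integral_le_of_norm_le ((integrable_const (|f 0| + c)).fun_add
    ((integrable_norm_sq_coeFn_Lp a).const_mul (2 * c)))
    (Eventually.of_forall fun x => abs_le_add_mul_norm_sq hf hc hG (a x))

theorem continuous_integral_comp (hf : LocallyLipschitz f) (hc : 0 ≤ c)
    (hG : ∀ z w : E, |clarkeDeriv f z w| ≤ c * (1 + ‖z‖) * ‖w‖) :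
    Continuous fun a : Lp E 2 μ => ∫ x, f (a x) ∂μ := by
  refine continuous_iff_continuousAt.2 fun a => ?_
  have hI : Integrable (fun x => (1 + ‖a x‖) ^ 2) μ := by
    refine Integrable.mono' (((integrable_const (2 : ℝ)).add
      ((integrable_norm_sq_coeFn_Lp a).const_mul 2))) ?_ (Eventually.of_forall fun x => ?_)
    · exact (((aestronglyMeasurable_const (b := (1 : ℝ))).add (Lp.aestronglyMeasurable a).norm).pow 2)
    · rw [Real.norm_eq_abs, abs_of_nonneg (sq_nonneg _)]
      change (1 + ‖a x‖) ^ 2 ≤ 2 + 2 * ‖a x‖ ^ 2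
      nlinarith [sq_nonneg (1 - ‖a x‖)]
  set M := ∫ x, (1 + ‖a x‖) ^ 2 ∂μ
  have hM : 0 ≤ M := integral_nonneg fun x => sq_nonneg _
  have key : ∀ ε > 0, ∀ b : Lp E 2 μ,
      |(∫ x, f (b x) ∂μ) - ∫ x, f (a x) ∂μ| ≤ ε * M + (c ^ 2 / ε + c) * ‖b - a‖ ^ 2 := by
    intro ε hε b
    rw [← integral_sub (integrable_comp_Lp hf hc hG b) (integrable_comp_Lp hf hc hG a),
      ← integral_norm_sq_sub, ← integral_const_mul, ← integral_const_mul, ← integral_add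
      (hI.const_mul ε) ((integrable_norm_sq_sub b a).const_mul _)]
    rw [← Real.norm_eq_abs]
    refine norm_integral_le_of_norm_le ((hI.const_mul ε).add
      ((integrable_norm_sq_sub b a).const_mul _)) (Eventually.of_forall fun x => ?_)
    refine (abs_sub_le_of_abs_clarkeDeriv_le hf hc hG (a x) (b x)).trans ?_
    have h : c * (1 + ‖a x‖) * ‖b x - a x‖ ≤
        ε * (1 + ‖a x‖) ^ 2 + c ^ 2 / ε * ‖b x - a x‖ ^ 2 := by
      have h0 : 0 ≤ c * (1 + ‖a x‖) * ‖b x - a x‖ := by positivity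
      have h1 : ε * (1 + ‖a x‖) ^ 2 + c ^ 2 / ε * ‖b x - a x‖ ^ 2 -
          2 * (c * (1 + ‖a x‖) * ‖b x - a x‖) =
          (ε * (1 + ‖a x‖) - c * ‖b x - a x‖) ^ 2 / ε := by
        field_simp
        ring
      have h2 : 0 ≤ (ε * (1 + ‖a x‖) - c * ‖b x - a x‖) ^ 2 / ε := by positivity
      linarith
    calc c * (1 + ‖a x‖ + ‖b x - a x‖) * ‖b x - a x‖
        = c * (1 + ‖a x‖) * ‖b x - a x‖ + c * ‖b x - a x‖ ^ 2 := by ring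
      _ ≤ ε * (1 + ‖a x‖) ^ 2 + c ^ 2 / ε * ‖b x - a x‖ ^ 2 + c * ‖b x - a x‖ ^ 2 := by gcongr
      _ = ε * (1 + ‖a x‖) ^ 2 + (c ^ 2 / ε + c) * ‖b x - a x‖ ^ 2 := by ring
  rw [ContinuousAt, Metric.tendsto_nhds]
  intro δ hδ
  set ε := δ / (2 * (M + 1)) with hε
  have hεpos : 0 < ε := by positivity
  have hlim : Tendsto (fun b : Lp E 2 μ => (c ^ 2 / ε + c) * ‖b - a‖ ^ 2) (𝓝 a)
      (𝓝 ((c ^ 2 / ε + c) * ‖a - a‖ ^ 2)) := Continuous.tendsto (by fun_prop) a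
  rw [sub_self, norm_zero, zero_pow two_ne_zero, mul_zero] at hlim
  filter_upwards [hlim.eventually (gt_mem_nhds (half_pos hδ))] with b hb
  rw [Real.dist_eq]
  have hεM : ε * M ≤ δ / 2 := by
    calc ε * M ≤ ε * (M + 1) := by gcongr; linarith
      _ = δ / 2 := by rw [hε]; field_simp
  linarith [key ε hεpos b]

theorem integral_comp_midpoint_le (hf : LocallyLipschitz f) (hc : 0 ≤ c)
    (hG : ∀ z w : E, |clarkeDeriv f z w| ≤ c * (1 + ‖z‖) * ‖w‖) {α : ℝ} (hα : 0 ≤ α)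
    (hmon : ∀ z₁ z₂ : E,
      clarkeDeriv f z₁ (z₂ - z₁) + clarkeDeriv f z₂ (z₁ - z₂) ≤ α * ‖z₁ - z₂‖ ^ 2)
    (a b : Lp E 2 μ) :
    ∫ x, f (((1 / 2 : ℝ) • (a + b)) x) ∂μ ≤
      ((∫ x, f (a x) ∂μ) + ∫ x, f (b x) ∂μ) / 2 + α / 4 * ‖a - b‖ ^ 2 := by
  have ha := integrable_comp_Lp hf hc hG a
  have hb := integrable_comp_Lp hf hc hG b
  have hs := (ha.fun_add hb).div_const 2
  have hab := (integrable_norm_sq_sub a b).const_mul (α / 4)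
  rw [← integral_add ha hb, ← integral_div, ← integral_norm_sq_sub, ← integral_const_mul,
    ← integral_add hs hab]
  refine integral_mono_ae (integrable_comp_Lp hf hc hG _) (hs.add hab) ?_
  filter_upwards [Lp.coeFn_smul (1 / 2 : ℝ) (a + b), Lp.coeFn_add a b] with x h1 h2
  rw [h1, Pi.smul_apply, h2]
  exact midpoint_le_of_clarkeDeriv_le hf hα hmon (a x) (b x)

variable [MeasurableSpace E] [BorelSpace E] [SecondCountableTopology E]

theorem integrable_clarkeDeriv (hf : LocallyLipschitz f) (hc : 0 ≤ c)
    (hG : ∀ z w : E, |clarkeDeriv f z w| ≤ c * (1 + ‖z‖) * ‖w‖) (a b : Lp E 2 μ) :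
    Integrable (fun x => clarkeDeriv f (a x) (b x - a x)) μ := by
  have ha := (Lp.aestronglyMeasurable a).aemeasurable
  have hb := (Lp.aestronglyMeasurable b).aemeasurable
  refine Integrable.mono' (g := fun x => c * (1 + ‖a x‖ ^ 2 + ‖b x - a x‖ ^ 2)) ?_ ?_ ?_
  · exact (((integrable_const 1).add (integrable_norm_sq_coeFn_Lp a)).add
      (integrable_norm_sq_sub b a)).const_mul c
  · exact ((measurable_clarkeDeriv hf hG).comp_aemeasurable
      (ha.prodMk (hb.sub ha))).aestronglyMeasurable
  · refine Eventually.of_forall fun x => (hG _ _).trans ?_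
    rw [mul_assoc]
    gcongr
    nlinarith [sq_nonneg (1 - ‖a x‖), sq_nonneg (1 + ‖a x‖ - ‖b x - a x‖)]

theorem integral_clarkeDeriv_add_le (hf : LocallyLipschitz f) (hc : 0 ≤ c)
    (hG : ∀ z w : E, |clarkeDeriv f z w| ≤ c * (1 + ‖z‖) * ‖w‖) {α : ℝ}
    (hmon : ∀ z₁ z₂ : E,
      clarkeDeriv f z₁ (z₂ - z₁) + clarkeDeriv f z₂ (z₁ - z₂) ≤ α * ‖z₁ - z₂‖ ^ 2)
    (a b : Lp E 2 μ) :
    (∫ x, clarkeDeriv f (a x) (b x - a x) ∂μ) + ∫ x, clarkeDeriv f (b x) (a x - b x) ∂μ ≤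
      α * ‖a - b‖ ^ 2 := by
  rw [← integral_add (integrable_clarkeDeriv hf hc hG a b) (integrable_clarkeDeriv hf hc hG b a),
    ← integral_norm_sq_sub, ← integral_const_mul]
  exact integral_mono ((integrable_clarkeDeriv hf hc hG a b).add
    (integrable_clarkeDeriv hf hc hG b a)) ((integrable_norm_sq_sub a b).const_mul α)
    fun x => hmon _ _

/-- Reverse Fatou for the difference quotients of the integral functional. -/
theorem exists_tendsto_integral_clarkeDeriv (hf : LocallyLipschitz f) (hc : 0 ≤ c)
    (hG : ∀ z w : E, |clarkeDeriv f z w| ≤ c * (1 + ‖z‖) * ‖w‖) (a b : Lp E 2 μ)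
    {t : ℕ → ℝ} (ht : ∀ n, t n ∈ Set.Ioc (0 : ℝ) 1) (ht0 : Tendsto t atTop (𝓝 0)) :
    ∃ h : ℕ → ℝ, Tendsto h atTop (𝓝 (∫ x, clarkeDeriv f (a x) (b x - a x) ∂μ)) ∧
      ∀ n, (∫ x, f ((a + t n • (b - a)) x) ∂μ) - ∫ x, f (a x) ∂μ ≤ t n * h n := by
  set q : ℕ → Δ → ℝ := fun n x => (f (a x + t n • (b x - a x)) - f (a x)) / t n with hq
  set D : Δ → ℝ := fun x => clarkeDeriv f (a x) (b x - a x) with hD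
  set g : Δ → ℝ := fun x => 2 * c * (1 + ‖a x‖ ^ 2 + ‖b x - a x‖ ^ 2) with hg
  have hDint : Integrable D μ := integrable_clarkeDeriv hf hc hG a b
  have hgint : Integrable g μ := (((integrable_const 1).add (integrable_norm_sq_coeFn_Lp a)).add
    (integrable_norm_sq_sub b a)).const_mul (2 * c)
  have hqm : ∀ n, AEStronglyMeasurable (q n) μ := by
    intro n
    have ha := Lp.aestronglyMeasurable a
    have hb := Lp.aestronglyMeasurable b
    exact (((hf.continuous.comp_aestronglyMeasurable
      (ha.add ((hb.sub ha).const_smul (t n)))).sub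
      (hf.continuous.comp_aestronglyMeasurable ha)).aemeasurable.div_const
      (t n)).aestronglyMeasurable
  have hqg : ∀ n x, |q n x| ≤ g x := by
    intro n x
    have h := abs_sub_le_of_abs_clarkeDeriv_le hf hc hG (a x) (a x + t n • (b x - a x))
    have ht1 := (ht n).2
    have htp := (ht n).1
    rw [add_sub_cancel_left, norm_smul, Real.norm_eq_abs, abs_of_pos htp] at h
    rw [hq, abs_div, abs_of_pos htp, div_le_iff₀ htp]
    refine h.trans ?_
    have h1 : t n * ‖b x - a x‖ ≤ ‖b x - a x‖ := mul_le_of_le_one_left (norm_nonneg _) ht1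
    calc c * (1 + ‖a x‖ + t n * ‖b x - a x‖) * (t n * ‖b x - a x‖)
        ≤ c * (1 + ‖a x‖ + ‖b x - a x‖) * (t n * ‖b x - a x‖) := by gcongr
      _ = c * ((1 + ‖a x‖ + ‖b x - a x‖) * ‖b x - a x‖) * t n := by ring
      _ ≤ c * (2 * (1 + ‖a x‖ ^ 2 + ‖b x - a x‖ ^ 2)) * t n := by
        refine mul_le_mul_of_nonneg_right (mul_le_mul_of_nonneg_left ?_ hc) htp.le
        nlinarith [sq_nonneg (1 - ‖b x - a x‖), sq_nonneg (‖a x‖ - ‖b x - a x‖),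
          sq_nonneg ‖a x‖]
      _ = g x * t n := by rw [hg]; ring
  have hDg : ∀ x, |D x| ≤ g x := by
    intro x
    refine (hG _ _).trans ?_
    change c * (1 + ‖a x‖) * ‖b x - a x‖ ≤ 2 * c * (1 + ‖a x‖ ^ 2 + ‖b x - a x‖ ^ 2)
    rw [mul_assoc, mul_comm 2 c, mul_assoc]
    refine mul_le_mul_of_nonneg_left ?_ hc
    nlinarith [sq_nonneg (1 - ‖a x‖), sq_nonneg (1 + ‖a x‖ - ‖b x - a x‖), sq_nonneg ‖a x‖]
  have hqint : ∀ n, Integrable (q n) μ := fun n =>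
    hgint.mono' (hqm n) (Eventually.of_forall (hqg n))
  refine ⟨fun n => ∫ x, max (q n x) (D x) ∂μ, ?_, fun n => ?_⟩
  · refine tendsto_integral_of_dominated_convergence g
      (fun n => ((hqint n).sup hDint).aestronglyMeasurable) hgint
      (fun n => Eventually.of_forall fun x => ?_) (Eventually.of_forall fun x => ?_)
    · exact abs_max_le_max_abs_abs.trans (max_le (hqg n x) (hDg x))
    · refine tendsto_order.2 ⟨fun r hr => Eventually.of_forall fun n => hr.trans_le (le_max_right _ _),
        fun r hr => ?_⟩
      have hev := eventually_quotient_lt_of_clarkeDeriv_lt hf hr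
      have ht' : Tendsto t atTop (𝓝[>] 0) :=
        tendsto_nhdsWithin_iff.2 ⟨ht0, Eventually.of_forall fun n => (ht n).1⟩
      filter_upwards [((tendsto_const_nhds (x := a x)).prodMk ht').eventually hev] with n hn
      exact max_lt hn hr
  · have htp := (ht n).1
    have h1 : (∫ x, f ((a + t n • (b - a)) x) ∂μ) - ∫ x, f (a x) ∂μ = t n * ∫ x, q n x ∂μ := by
      rw [← integral_sub (integrable_comp_Lp hf hc hG _) (integrable_comp_Lp hf hc hG a),
        ← integral_const_mul]
      refine integral_congr_ae ?_
      filter_upwards [Lp.coeFn_add a (t n • (b - a)), Lp.coeFn_smul (t n) (b - a),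
        Lp.coeFn_sub b a] with x e1 e2 e3
      simp only [hq]
      rw [e1, Pi.add_apply, e2, Pi.smul_apply, e3, Pi.sub_apply]
      field_simp
    rw [h1]
    gcongr
    exact integral_mono (hqint n) ((hqint n).sup hDint) fun x => le_max_left _ _

end IntegralFunctional

section Hilbert

variable {V : Type*} [NormedAddCommGroup V]

theorem exists_isMinOn_of_midpoint_le [NormedSpace ℝ V] [CompleteSpace V] {K : Set V}
    (hKne : K.Nonempty) (hKcl : IsClosed K) (hKcv : Convex ℝ K) {F : V → ℝ} (hF : Continuous F)
    (hbdd : BddBelow (F '' K)) {κ : ℝ} (hκ : 0 < κ)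
    (hmid : ∀ u v, F ((1 / 2 : ℝ) • (u + v)) ≤ (F u + F v) / 2 - κ * ‖u - v‖ ^ 2) :
    ∃ u ∈ K, IsMinOn F K u := by
  set I := sInf (F '' K)
  have hI : ∀ v ∈ K, I ≤ F v := fun v hv => csInf_le hbdd ⟨v, hv, rfl⟩
  have hex : ∀ n : ℕ, ∃ u ∈ K, F u < I + 1 / ((n : ℝ) + 1) := by
    intro n
    obtain ⟨_, ⟨u, hu, rfl⟩, h⟩ := exists_lt_of_csInf_lt (hKne.image F)
      (lt_add_of_pos_right I (Nat.one_div_pos_of_nat (α := ℝ) (n := n)))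
    exact ⟨u, hu, h⟩
  choose u huK hu using hex
  have hdist : ∀ N n k : ℕ, N ≤ n → N ≤ k → κ * ‖u n - u k‖ ^ 2 ≤ 1 / ((N : ℝ) + 1) := by
    intro N n k hn hk
    have hm : (1 / 2 : ℝ) • (u n + u k) ∈ K := by
      rw [smul_add]
      exact hKcv (huK n) (huK k) (by norm_num) (by norm_num) (by norm_num)
    have h1 := Nat.one_div_le_one_div (α := ℝ) hn
    have h2 := Nat.one_div_le_one_div (α := ℝ) hk
    linarith [hmid (u n) (u k), hI _ hm, hu n, hu k]
  have hcauchy : CauchySeq u := by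
    refine Metric.cauchySeq_iff.2 fun ε hε => ?_
    obtain ⟨N, hN⟩ := exists_nat_one_div_lt (mul_pos hκ (pow_pos hε 2))
    refine ⟨N, fun n hn k hk => ?_⟩
    rw [dist_eq_norm]
    refine lt_of_pow_lt_pow_left₀ 2 hε.le (lt_of_mul_lt_mul_left ?_ hκ.le)
    exact (hdist N n k hn hk).trans_lt hN
  obtain ⟨x, hx⟩ := cauchySeq_tendsto_of_complete hcauchy
  refine ⟨x, hKcl.mem_of_tendsto hx (Eventually.of_forall huK), fun v hv => ?_⟩
  have hlim : Tendsto (fun n : ℕ => I + 1 / ((n : ℝ) + 1)) atTop (𝓝 (I + 0)) :=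
    tendsto_const_nhds.add tendsto_one_div_add_atTop_nhds_zero_nat
  rw [add_zero] at hlim
  exact (le_of_tendsto_of_tendsto' ((hF.tendsto x).comp hx) hlim fun n => (hu n).le).trans (hI v hv)

variable [InnerProductSpace ℝ V] {K : Set V} {Φ : V → ℝ} {J : V → V → ℝ}

theorem norm_sub_le_of_solutions {A : V → (V →L[ℝ] ℝ)} {m a : ℝ}
    (hAmon : ∀ v₁ v₂ : V, (A v₁ - A v₂) (v₁ - v₂) ≥ m * ‖v₁ - v₂‖ ^ 2)
    (ham : a < m) (hJ : ∀ u v, J u v + J v u ≤ a * ‖u - v‖ ^ 2) {f₁ f₂ : V →L[ℝ] ℝ} {u₁ u₂ : V}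
    (h₁ : u₁ ∈ K ∧ ∀ v ∈ K, A u₁ (v - u₁) + Φ v - Φ u₁ + J u₁ v ≥ f₁ (v - u₁))
    (h₂ : u₂ ∈ K ∧ ∀ v ∈ K, A u₂ (v - u₂) + Φ v - Φ u₂ + J u₂ v ≥ f₂ (v - u₂)) :
    ‖u₁ - u₂‖ ≤ (m - a)⁻¹ * ‖f₁ - f₂‖ := by
  have hpos := sub_pos.2 ham
  rw [inv_mul_eq_div, le_div_iff₀ hpos, mul_comm]
  rcases (norm_nonneg (u₁ - u₂)).eq_or_lt with h0 | h0
  · rw [← h0, mul_zero]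
    positivity
  refine le_of_mul_le_mul_right ?_ h0
  refine le_trans ?_ ((le_abs_self _).trans ((f₁ - f₂).le_opNorm (u₁ - u₂)))
  have e1 := h₁.2 u₂ h₂.1
  have e2 := h₂.2 u₁ h₁.1
  have e3 := hAmon u₁ u₂
  have e4 := hJ u₁ u₂
  rw [← neg_sub u₁ u₂, map_neg, map_neg] at e1
  rw [sub_apply] at e3 ⊢
  linarith

variable [CompleteSpace V]

/-- Solvability of the variational-hemivariational inequality whose operator is the identity, for
small weights on the nonsmooth terms. The functional `P` is an approximately convex potential
with generalized directional derivative `J`. -/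
theorem exists_forall_regularized_inequality (hKne : K.Nonempty) (hKcl : IsClosed K)
    (hKcv : Convex ℝ K) (hΦcv : ConvexOn ℝ Set.univ Φ) (hΦ : Continuous Φ) {P : V → ℝ}
    (hP : Continuous P) {B C β : ℝ} (hPlow : ∀ v, -C - B * ‖v‖ ^ 2 ≤ P v)
    (hPmid : ∀ u v, P ((1 / 2 : ℝ) • (u + v)) ≤ (P u + P v) / 2 + β * ‖u - v‖ ^ 2)
    (hPJ : ∀ u v, ∀ t : ℕ → ℝ, (∀ n, t n ∈ Set.Ioc (0 : ℝ) 1) → Tendsto t atTop (𝓝 0) →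
      ∃ h : ℕ → ℝ, Tendsto h atTop (𝓝 (J u v)) ∧ ∀ n, P (u + t n • (v - u)) - P u ≤ t n * h n)
    {θ : ℝ} (hθ : 0 < θ) (hθB : θ * B ≤ 1 / 8) (hθβ : θ * β ≤ 1 / 16) (g : V) :
    ∃ u ∈ K, ∀ v ∈ K, 0 ≤ ⟪u - g, v - u⟫ + θ * (Φ v - Φ u + J u v) := by
  set F : V → ℝ := fun v => ‖v - g‖ ^ 2 / 2 + θ * (Φ v + P v) with hF
  have hFcont : Continuous F := by fun_prop
  obtain ⟨l, c₀, hl, -⟩ := hΦcv.exists_affine_le_of_lt (𝕜 := ℝ) (Set.mem_univ (0 : V))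
    (sub_one_lt (Φ 0)) isClosed_univ
    (hΦ.lowerSemicontinuous.lowerSemicontinuousOn Set.univ)
  have hΦlow : ∀ v, -(‖l‖ * ‖v‖) + c₀ ≤ Φ v := by
    intro v
    have h1 : l v + c₀ ≤ Φ v := hl ⟨v, Set.mem_univ v⟩
    have h2 := (abs_le.1 (l.le_opNorm v)).1
    linarith
  have hbdd : BddBelow (F '' K) := by
    refine ⟨-‖g‖ ^ 2 / 2 + θ * c₀ - θ * C - 2 * (θ * ‖l‖) ^ 2, ?_⟩
    rintro _ ⟨v, -, rfl⟩
    have h1 : ‖v‖ ^ 2 ≤ 2 * ‖v - g‖ ^ 2 + 2 * ‖g‖ ^ 2 := by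
      have h := norm_add_le (v - g) g
      rw [sub_add_cancel] at h
      nlinarith [sq_nonneg (‖v - g‖ - ‖g‖), norm_nonneg v, norm_nonneg (v - g), norm_nonneg g]
    have h2 := mul_le_mul_of_nonneg_left (hΦlow v) hθ.le
    have h3 := mul_le_mul_of_nonneg_left (hPlow v) hθ.le
    have h4 := mul_le_mul_of_nonneg_right hθB (sq_nonneg ‖v‖)
    simp only [hF]
    nlinarith [sq_nonneg (‖v‖ - 4 * (θ * ‖l‖))]
  have hmid : ∀ u v, F ((1 / 2 : ℝ) • (u + v)) ≤ (F u + F v) / 2 - 1 / 16 * ‖u - v‖ ^ 2 := by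
    intro u v
    have h1 : ‖(1 / 2 : ℝ) • (u + v) - g‖ ^ 2 =
        (‖u - g‖ ^ 2 + ‖v - g‖ ^ 2) / 2 - ‖u - v‖ ^ 2 / 4 := by
      have e1 : (1 / 2 : ℝ) • (u + v) - g = (1 / 2 : ℝ) • ((u - g) + (v - g)) := by module
      have e2 : u - v = (u - g) - (v - g) := by abel
      have e3 := parallelogram_law_with_norm ℝ (u - g) (v - g)
      rw [← e2] at e3
      rw [e1, norm_smul, mul_pow]
      norm_num
      linarith
    have h2 : Φ ((1 / 2 : ℝ) • (u + v)) ≤ (Φ u + Φ v) / 2 := by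
      have h := hΦcv.2 (Set.mem_univ u) (Set.mem_univ v) (by norm_num : (0 : ℝ) ≤ 1 / 2)
        (by norm_num : (0 : ℝ) ≤ 1 / 2) (by norm_num)
      rw [← smul_add, smul_eq_mul, smul_eq_mul] at h
      linarith
    have h3 := mul_le_mul_of_nonneg_left (add_le_add h2 (hPmid u v)) hθ.le
    have h4 := mul_le_mul_of_nonneg_right hθβ (sq_nonneg ‖u - v‖)
    simp only [hF]
    rw [h1]
    linarith
  obtain ⟨u, huK, humin⟩ := exists_isMinOn_of_midpoint_le hKne hKcl hKcv hFcont hbdd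
    (by norm_num : (0 : ℝ) < 1 / 16) hmid
  refine ⟨u, huK, fun v hv => ?_⟩
  set t : ℕ → ℝ := fun n => 1 / ((n : ℝ) + 1) with ht_def
  have ht0 : Tendsto t atTop (𝓝 0) := tendsto_one_div_add_atTop_nhds_zero_nat
  have ht : ∀ n, t n ∈ Set.Ioc (0 : ℝ) 1 := fun n =>
    ⟨Nat.one_div_pos_of_nat, by simpa [ht_def] using Nat.one_div_le_one_div (α := ℝ) n.zero_le⟩
  obtain ⟨h, hlim, hle⟩ := hPJ u v t ht ht0
  have hlim' : Tendsto (fun n => ⟪u - g, v - u⟫ + t n * (‖v - u‖ ^ 2 / 2) +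
      θ * (Φ v - Φ u + h n)) atTop
      (𝓝 (⟪u - g, v - u⟫ + 0 * (‖v - u‖ ^ 2 / 2) + θ * (Φ v - Φ u + J u v))) :=
    (tendsto_const_nhds.add (ht0.mul_const _)).add ((hlim.const_add _).const_mul θ)
  rw [zero_mul, add_zero] at hlim'
  refine ge_of_tendsto' hlim' fun n => ?_
  obtain ⟨htp, ht1⟩ := ht n
  have hmin : F u ≤ F (u + t n • (v - u)) := humin (hKcv.add_smul_sub_mem huK hv ⟨htp.le, ht1⟩)
  have h1 : ‖u + t n • (v - u) - g‖ ^ 2 =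
      ‖u - g‖ ^ 2 + 2 * (t n * ⟪u - g, v - u⟫) + t n ^ 2 * ‖v - u‖ ^ 2 := by
    rw [add_sub_right_comm, norm_add_sq_real, real_inner_smul_right, norm_smul, mul_pow,
      Real.norm_eq_abs, sq_abs]
  have h2 : Φ (u + t n • (v - u)) ≤ Φ u + t n * (Φ v - Φ u) := by
    have e : u + t n • (v - u) = (1 - t n) • u + t n • v := by module
    have h := hΦcv.2 (Set.mem_univ u) (Set.mem_univ v) (sub_nonneg.2 ht1) htp.le (by ring)
    rw [smul_eq_mul, smul_eq_mul] at h
    rw [e]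
    linarith
  have h3 := mul_le_mul_of_nonneg_left (add_le_add h2 (sub_le_iff_le_add.1 (hle n))) hθ.le
  simp only [hF, h1] at hmin
  refine le_of_mul_le_mul_left ?_ htp
  linarith

theorem exists_solution_of_regularized {A : V → (V →L[ℝ] ℝ)} {L m a θ₀ : ℝ} (hL : 0 < L)
    (hALip : ∀ v₁ v₂ : V, ‖A v₁ - A v₂‖ ≤ L * ‖v₁ - v₂‖)
    (hAmon : ∀ v₁ v₂ : V, (A v₁ - A v₂) (v₁ - v₂) ≥ m * ‖v₁ - v₂‖ ^ 2)
    (ha : 0 ≤ a) (ham : a < m) (hJ : ∀ u v, J u v + J v u ≤ a * ‖u - v‖ ^ 2) (hθ₀ : 0 < θ₀)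
    (hreg : ∀ θ, 0 < θ → θ ≤ θ₀ → ∀ g : V, ∃ u ∈ K, ∀ v ∈ K,
      0 ≤ ⟪u - g, v - u⟫ + θ * (Φ v - Φ u + J u v)) (f : V →L[ℝ] ℝ) :
    ∃ u ∈ K, ∀ v ∈ K, A u (v - u) + Φ v - Φ u + J u v ≥ f (v - u) := by
  obtain ⟨θ, hθ, hθle⟩ : ∃ θ, 0 < θ ∧ θ ≤ min θ₀ (min ((m - a) / L ^ 2) (1 / (2 * (a + 1)))) := by
    have := sub_pos.2 ham
    exact ⟨_, by positivity, le_rfl⟩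
  obtain ⟨hθ1, hθ2, hθ3⟩ : θ ≤ θ₀ ∧ θ * L ^ 2 ≤ m - a ∧ θ * (2 * (a + 1)) ≤ 1 := by
    rw [le_min_iff, le_min_iff, le_div_iff₀ (by positivity), le_div_iff₀ (by positivity)] at hθle
    exact hθle
  have hθa : 0 < 1 - θ * a := by linarith
  set R : V → V := fun w => (InnerProductSpace.toDual ℝ V).symm (A w - f) with hR
  have hRin : ∀ w x, ⟪R w, x⟫ = A w x - f x := fun w x => InnerProductSpace.toDual_symm_apply
  choose T hTK hT using fun w => hreg θ hθ hθ1 (w - θ • R w)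
  set q := 1 - 2 * θ * m + θ ^ 2 * L ^ 2 with hq
  have hstep : ∀ w₁ w₂, ‖(w₁ - θ • R w₁) - (w₂ - θ • R w₂)‖ ≤ √q * ‖w₁ - w₂‖ := by
    intro w₁ w₂
    have e : (w₁ - θ • R w₁) - (w₂ - θ • R w₂) = (w₁ - w₂) - θ • (R w₁ - R w₂) := by module
    have hnorm : ‖R w₁ - R w₂‖ ≤ L * ‖w₁ - w₂‖ := by
      rw [hR, ← map_sub, LinearIsometryEquiv.norm_map, sub_sub_sub_cancel_right]
      exact hALip w₁ w₂
    have hin : m * ‖w₁ - w₂‖ ^ 2 ≤ ⟪w₁ - w₂, R w₁ - R w₂⟫ := by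
      rw [real_inner_comm, inner_sub_left, hRin, hRin]
      have := hAmon w₁ w₂
      rw [sub_apply] at this
      linarith
    have hsq : ‖(w₁ - w₂) - θ • (R w₁ - R w₂)‖ ^ 2 ≤ q * ‖w₁ - w₂‖ ^ 2 := by
      rw [norm_sub_sq_real, real_inner_smul_right, norm_smul, mul_pow, Real.norm_eq_abs, sq_abs]
      have h1 : ‖R w₁ - R w₂‖ ^ 2 ≤ (L * ‖w₁ - w₂‖) ^ 2 := by gcongr
      have h2 := mul_le_mul_of_nonneg_left h1 (sq_nonneg θ)
      have h3 := mul_le_mul_of_nonneg_left hin hθ.le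
      rw [hq]
      linarith
    rw [e]
    refine (Real.le_sqrt_of_sq_le hsq).trans_eq ?_
    rw [Real.sqrt_mul' _ (sq_nonneg _), Real.sqrt_sq (norm_nonneg _)]
  have hTdist : ∀ w₁ w₂, (1 - θ * a) * ‖T w₁ - T w₂‖ ≤ √q * ‖w₁ - w₂‖ := by
    intro w₁ w₂
    rcases (norm_nonneg (T w₁ - T w₂)).eq_or_lt with h0 | hpos
    · rw [← h0, mul_zero]
      positivity
    refine le_trans (le_of_mul_le_mul_right ?_ hpos) (hstep w₁ w₂)
    refine le_trans ?_ (real_inner_le_norm _ _)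
    have h1 := hT w₁ (T w₂) (hTK w₂)
    have h2 := hT w₂ (T w₁) (hTK w₁)
    have h3 := mul_le_mul_of_nonneg_left (hJ (T w₁) (T w₂)) hθ.le
    have e : ⟪T w₁ - (w₁ - θ • R w₁), T w₂ - T w₁⟫ + ⟪T w₂ - (w₂ - θ • R w₂), T w₁ - T w₂⟫ =
        ⟪(w₁ - θ • R w₁) - (w₂ - θ • R w₂), T w₁ - T w₂⟫ - ‖T w₁ - T w₂‖ ^ 2 := by
      rw [← real_inner_self_eq_norm_sq, ← neg_sub (T w₁) (T w₂), inner_neg_right, ← inner_sub_left,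
        neg_add_eq_sub, ← inner_sub_left]
      congr 1
      abel
    linarith
  have hρ : √q / (1 - θ * a) < 1 := by
    rw [div_lt_one hθa, Real.sqrt_lt' hθa]
    nlinarith [mul_le_mul_of_nonneg_left hθ2 hθ.le, mul_pos hθ (sub_pos.2 ham),
      sq_nonneg (θ * a)]
  have hcontr : ContractingWith ⟨√q / (1 - θ * a), by positivity⟩ T := by
    refine ⟨hρ, LipschitzWith.of_dist_le_mul fun w₁ w₂ => ?_⟩
    rw [dist_eq_norm, dist_eq_norm]
    change ‖T w₁ - T w₂‖ ≤ √q / (1 - θ * a) * ‖w₁ - w₂‖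
    rw [div_mul_eq_mul_div, le_div_iff₀ hθa, mul_comm]
    exact hTdist w₁ w₂
  set u := hcontr.fixedPoint
  have hu : T u = u := hcontr.fixedPoint_isFixedPt
  refine ⟨u, hu ▸ hTK u, fun v hv => ?_⟩
  have h := hT u v hv
  rw [hu, sub_sub_cancel, real_inner_smul_left, hRin, ← mul_add] at h
  linarith [nonneg_of_mul_nonneg_right h hθ]

end Hilbert

theorem stmt13 {V : Type*} [NormedAddCommGroup V] [InnerProductSpace ℝ V] [CompleteSpace V]
    {Δ : Type*} [MeasurableSpace Δ] (μ : Measure Δ) [IsFiniteMeasure μ]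
    (m : ℕ) (hm : 1 ≤ m)
    (γψ : V →L[ℝ] (Lp (EuclideanSpace ℝ (Fin m)) 2 μ))
    (cΔ : ℝ) (hcΔ : 0 < cΔ) (hγ : ∀ v : V, ‖γψ v‖ ≤ cΔ * ‖v‖)
    (ψ : EuclideanSpace ℝ (Fin m) → ℝ)
    (hψlip : ∀ z : EuclideanSpace ℝ (Fin m),
      ∃ (L : NNReal) (s : Set (EuclideanSpace ℝ (Fin m))), s ∈ 𝓝 z ∧ LipschitzOnWith L ψ s)
    (cψ : ℝ) (hcψ : 0 ≤ cψ)
    (hψgrowth : ∀ z ξ : EuclideanSpace ℝ (Fin m),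
      (∀ w, ⟪ξ, w⟫ ≤ clarkeDeriv ψ z w) → ‖ξ‖ ≤ cψ * (1 + ‖z‖))
    (αψ : ℝ) (hαψ : 0 ≤ αψ)
    (hψmon : ∀ z₁ z₂ : EuclideanSpace ℝ (Fin m),
      clarkeDeriv ψ z₁ (z₂ - z₁) + clarkeDeriv ψ z₂ (z₁ - z₂) ≤ αψ * ‖z₁ - z₂‖ ^ 2)
    (K : Set V) (hKne : K.Nonempty) (hKcl : IsClosed K) (hKcv : Convex ℝ K)
    (A : V → (V →L[ℝ] ℝ)) (LA : ℝ) (hLA : 0 < LA)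
    (hALip : ∀ v₁ v₂ : V, ‖A v₁ - A v₂‖ ≤ LA * ‖v₁ - v₂‖)
    (mA : ℝ) (hmA : 0 < mA)
    (hAmon : ∀ v₁ v₂ : V, (A v₁ - A v₂) (v₁ - v₂) ≥ mA * ‖v₁ - v₂‖ ^ 2)
    (Φ : V → ℝ) (hΦcv : ConvexOn ℝ Set.univ Φ) (hΦcont : Continuous Φ)
    (f : V →L[ℝ] ℝ) (hsmall : αψ * cΔ ^ 2 < mA) :
    (∃! u : V, u ∈ K ∧ ∀ v ∈ K,
      (A u) (v - u) + Φ v - Φ u +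
        (∫ x, clarkeDeriv ψ ((γψ u) x) ((γψ v) x - (γψ u) x) ∂μ) ≥ f (v - u)) ∧
    (∃ c > (0:ℝ), ∀ f₁ f₂ : V →L[ℝ] ℝ, ∀ u₁ u₂ : V,
      (u₁ ∈ K ∧ ∀ v ∈ K,
        (A u₁) (v - u₁) + Φ v - Φ u₁ +
          (∫ x, clarkeDeriv ψ ((γψ u₁) x) ((γψ v) x - (γψ u₁) x) ∂μ) ≥ f₁ (v - u₁)) →
      (u₂ ∈ K ∧ ∀ v ∈ K,
        (A u₂) (v - u₂) + Φ v - Φ u₂ +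
          (∫ x, clarkeDeriv ψ ((γψ u₂) x) ((γψ v) x - (γψ u₂) x) ∂μ) ≥ f₂ (v - u₂)) →
      ‖u₁ - u₂‖ ≤ c * ‖f₁ - f₂‖) := by
  have hf : LocallyLipschitz ψ := hψlip
  have hG := abs_clarkeDeriv_le_of_subgradient_bound hf hψgrowth
  set J : V → V → ℝ := fun u v =>
    ∫ x, clarkeDeriv ψ ((γψ u) x) ((γψ v) x - (γψ u) x) ∂μ with hJdef
  have hγsq : ∀ v, ‖γψ v‖ ^ 2 ≤ cΔ ^ 2 * ‖v‖ ^ 2 := by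
    intro v
    rw [← mul_pow]
    gcongr
    exact hγ v
  have hJ : ∀ u v, J u v + J v u ≤ αψ * cΔ ^ 2 * ‖u - v‖ ^ 2 := by
    intro u v
    refine (integral_clarkeDeriv_add_le hf hcψ hG hψmon (γψ u) (γψ v)).trans ?_
    rw [← map_sub, mul_assoc]
    gcongr
    exact hγsq _
  obtain ⟨C, hC⟩ := exists_abs_integral_comp_le (μ := μ) hf hcψ hG
  set θ₀ := min (1 / (8 * (2 * cψ * cΔ ^ 2 + 1))) (1 / (16 * (αψ / 4 * cΔ ^ 2 + 1)))
  have hθ₀ : 0 < θ₀ := by positivity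
  have hreg : ∀ θ, 0 < θ → θ ≤ θ₀ → ∀ g : V, ∃ u ∈ K, ∀ v ∈ K,
      0 ≤ ⟪u - g, v - u⟫ + θ * (Φ v - Φ u + J u v) := by
    intro θ hθ hθle g
    rw [le_min_iff, le_div_iff₀ (by positivity), le_div_iff₀ (by positivity)] at hθle
    refine exists_forall_regularized_inequality hKne hKcl hKcv hΦcv hΦcont
      (P := fun v => ∫ x, ψ ((γψ v) x) ∂μ) (B := 2 * cψ * cΔ ^ 2) (C := C)
      (β := αψ / 4 * cΔ ^ 2) ((continuous_integral_comp hf hcψ hG).comp γψ.continuous)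
      (fun v => ?_) (fun u v => ?_) (fun u v t ht ht0 => ?_) hθ (by linarith) (by linarith) g
    · have h1 := (abs_le.1 (hC (γψ v))).1
      have h2 := mul_le_mul_of_nonneg_left (hγsq v) (by positivity : 0 ≤ 2 * cψ)
      linarith
    · have h1 := integral_comp_midpoint_le hf hcψ hG hαψ hψmon (γψ u) (γψ v)
      rw [← map_sub, ← map_add, ← map_smul] at h1
      have h2 := mul_le_mul_of_nonneg_left (hγsq (u - v)) (by positivity : 0 ≤ αψ / 4)
      linarith
    · simp only [map_add, map_smul, map_sub]
      exact exists_tendsto_integral_clarkeDeriv hf hcψ hG (γψ u) (γψ v) ht ht0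
  refine ⟨?_, (mA - αψ * cΔ ^ 2)⁻¹, inv_pos.2 (sub_pos.2 hsmall), fun f₁ f₂ u₁ u₂ h₁ h₂ =>
    norm_sub_le_of_solutions (J := J) hAmon hsmall hJ h₁ h₂⟩
  obtain ⟨u, huK, hu⟩ := exists_solution_of_regularized hLA hALip hAmon (by positivity) hsmall hJ
    hθ₀ hreg f
  refine ⟨u, ⟨huK, hu⟩, fun w hw => ?_⟩
  have h := norm_sub_le_of_solutions (J := J) hAmon hsmall hJ hw ⟨huK, hu⟩
  rw [sub_self, norm_zero, mul_zero] at h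
  exact sub_eq_zero.1 (norm_le_zero_iff.1 h)
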